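/- arXiv:2512.16597 — 4 statements merged into one kernel-verified Lean document; each statement's English description precedes it below -/
import Mathlib

section
/- Let K = ℚ(√3) and let E be the elliptic curve over K given by y² = x³ − 2x² − 3x = x(x + 1)(x − 3). Then E(K) contains a point P with 2P ≠ 0, but every point of E(K) has finite additive order (equivalently, E(K) is a finite group). Hence n = 1 is (ℚ(√3), 2π/3)-congruent but not properly (ℚ(√3), 2π/3)-congruent. -/
open IntermediateField

lemma sq_mod_facts (x : ℤ) : (x % 2 = 0 ∧ (x^2 % 16 = 0 ∨ x^2 % 16 = 4)) ∨ (x % 2 = 1 ∧ (x^2 % 16 = 1 ∨ x^2 % 16 = 9)) := by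
  have h : x % 16 = 0 ∨ x % 16 = 1 ∨ x % 16 = 2 ∨ x % 16 = 3 ∨ x % 16 = 4 ∨ x % 16 = 5 ∨ x % 16 = 6 ∨ x % 16 = 7 ∨ x % 16 = 8 ∨ x % 16 = 9 ∨ x % 16 = 10 ∨ x % 16 = 11 ∨ x % 16 = 12 ∨ x % 16 = 13 ∨ x % 16 = 14 ∨ x % 16 = 15 := by omega
  have h2 : x^2 % 16 = ((x % 16) * (x % 16)) % 16 := by rw [sq, Int.mul_emod]
  rcases h with h|h|h|h|h|h|h|h|h|h|h|h|h|h|h|h <;> rw [h] at h2 <;> omega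

lemma sq_mod_three (x : ℤ) : (x % 3 = 0 ∧ x^2 % 3 = 0) ∨ (x % 3 ≠ 0 ∧ x^2 % 3 = 1) := by
  have h : x % 3 = 0 ∨ x % 3 = 1 ∨ x % 3 = 2 := by omega
  have h2 : x^2 % 3 = ((x % 3) * (x % 3)) % 3 := by rw [sq, Int.mul_emod]
  rcases h with h|h|h <;> rw [h] at h2 <;> omega

lemma pos_pos_of {x y c : ℤ} (h : x * y = c) (hc : 0 < c) (hs : 0 < x + y) : 0 < x ∧ 0 < y := by
  constructor
  · by_contra hx
    have : 0 < y := by linarith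
    nlinarith
  · by_contra hx
    have : 0 < x := by linarith
    nlinarith

lemma split_one {x y c : ℤ} (h : x * y = c^2) (hc : c ≠ 0) (hs : 0 < x + y) (hco : IsCoprime x y) :
    ∃ u v : ℤ, x = u^2 ∧ y = v^2 := by
  obtain ⟨hx, hy⟩ := pos_pos_of h (by positivity) hs
  obtain ⟨u, hu⟩ := Int.sq_of_isCoprime hco h
  obtain ⟨v, hv⟩ := Int.sq_of_isCoprime hco.symm (by rw [mul_comm]; exact h)
  refine ⟨u, v, ?_, ?_⟩
  · rcases hu with hu | hu
    · exact hu
    · nlinarith [sq_nonneg u]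
  · rcases hv with hu | hu
    · exact hu
    · nlinarith [sq_nonneg v]

lemma split_three {x y c : ℤ} (h : x * y = 3 * c^2) (hc : c ≠ 0) (hs : 0 < x + y) (hco : IsCoprime x y) :
    ∃ u v : ℤ, (x = u^2 ∧ y = 3 * v^2) ∨ (x = 3 * v^2 ∧ y = u^2) := by
  obtain ⟨hx, hy⟩ := pos_pos_of h (by positivity) hs
  have h3 : (3:ℤ) ∣ x * y := ⟨_, h⟩
  rcases Int.prime_three.dvd_or_dvd h3 with ⟨k, hk⟩ | ⟨k, hk⟩
  · subst hk
    have e : k * y = c^2 := by linarith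
    obtain ⟨v, u, h1, h2⟩ := split_one e hc (by linarith) hco.of_mul_left_right
    exact ⟨u, v, Or.inr ⟨by rw [h1], h2⟩⟩
  · subst hk
    have e : x * k = c^2 := by linarith
    obtain ⟨v, u, h1, h2⟩ := split_one e hc (by linarith) hco.of_mul_right_right
    exact ⟨v, u, Or.inl ⟨h1, by rw [h2]⟩⟩

lemma four {u w m n : ℤ} (h : u * w = m * n) (hu : u ≠ 0) :
    ∃ a b c d : ℤ, u = a * b ∧ w = c * d ∧ m = a * c ∧ n = b * d ∧ IsCoprime b c := by
  have hg : (Int.gcd u m : ℤ) ≠ 0 := by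
    intro h0
    have := Int.gcd_eq_zero_iff.1 (by exact_mod_cast h0)
    exact hu this.1
  obtain ⟨b, hb⟩ := Int.gcd_dvd_left u m
  obtain ⟨c, hc⟩ := Int.gcd_dvd_right u m
  have hco : IsCoprime b c := by
    have := Int.gcd_eq_gcd_ab u m
    refine ⟨Int.gcdA u m, Int.gcdB u m, ?_⟩
    apply mul_left_cancel₀ hg
    calc _ = ((Int.gcd u m : ℤ) * b) * Int.gcdA u m + ((Int.gcd u m : ℤ) * c) * Int.gcdB u m := by ring
      _ = _ := by rw [← hb, ← hc, ← this, mul_one]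
  have hbw : b * w = c * n := by
    apply mul_left_cancel₀ hg
    calc _ = ((Int.gcd u m : ℤ) * b) * w := by ring
      _ = ((Int.gcd u m : ℤ) * c) * n := by rw [← hb, ← hc, h]
      _ = _ := by ring
  obtain ⟨d, hd⟩ : c ∣ w := hco.symm.dvd_of_dvd_mul_left ⟨n, hbw⟩
  have hb0 : b ≠ 0 := by rintro rfl; simp at hb; exact hu hb
  have hc0 : c ≠ 0 ∨ c = 0 := (em (c = 0)).symm
  rcases hc0 with hc0 | hc0
  · refine ⟨_, b, c, d, hb, hd, hc, ?_, hco⟩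
    apply mul_left_cancel₀ hc0
    rw [← hbw, hd]; ring
  · -- c = 0, so b is a unit
    subst hc0
    have hw : w = 0 := by
      have : b * w = 0 := by rw [hbw]; ring
      exact (mul_eq_zero.1 this).resolve_left hb0
    have hbu : IsUnit b := isCoprime_zero_right.1 hco
    obtain ⟨e, he⟩ := hbu.dvd (a := n)
    exact ⟨_, b, 0, e, hb, by simp [hw], hc, he, hco⟩

lemma half_coprime {r s x y : ℤ} (h1 : x + y = r) (h2 : x - y = s) (h : IsCoprime r s) :
    IsCoprime x y := by
  obtain ⟨a, b, h⟩ := h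
  exact ⟨a + b, a - b, by rw [← h, ← h1, ← h2]; ring⟩

lemma e_cases {e b c x y : ℤ} (hbc : IsCoprime b c) (h1 : b^2 - 4*c^2 = e * x) (h2 : b^2 - c^2 = e * y) :
    e = 1 ∨ e = -1 ∨ e = 3 ∨ e = -3 := by
  have hd : e ∣ 3 := by
    obtain ⟨f, g, hfg⟩ := (hbc.pow (m := 2) (n := 2))
    refine ⟨f * (4 * y - x) + g * (y - x), ?_⟩
    have k1 : 3 * b^2 = e * (4*y - x) := by linear_combination 4 * h2 - h1
    have k2 : 3 * c^2 = e * (y - x) := by linear_combination h2 - h1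
    linear_combination (-3) * hfg + f * k1 + g * k2
  have hn : e.natAbs ∣ 3 := Int.natAbs_dvd_natAbs.2 hd
  have := (Nat.dvd_prime Nat.prime_three).1 hn
  omega

lemma size_lt {q a b c d : ℤ} (hq : q ≠ 0) (h : q^2 = 4 * (a*b*c*d)^2) :
    c ≠ 0 ∧ d ≠ 0 ∧ a ≠ 0 ∧ b ≠ 0 ∧ c.natAbs < q.natAbs ∧ d.natAbs < q.natAbs := by
  have h0 : a*b*c*d ≠ 0 := by
    intro h0; rw [h0] at h; simp at h; exact hq h
  have hd : d ≠ 0 := by rintro rfl; simp at h0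
  have hc : c ≠ 0 := by rintro rfl; simp at h0
  have hb : b ≠ 0 := by rintro rfl; simp at h0
  have ha : a ≠ 0 := by rintro rfl; simp at h0
  have k : ∀ z t : ℤ, z ≠ 0 → t ≠ 0 → q^2 = 4 * (z * t)^2 → z.natAbs < q.natAbs := by
    intro z t hz ht hh
    rw [Int.natAbs_lt_iff_sq_lt, hh]
    have h1 : 0 < z^2 := by positivity
    have h2 : 0 < t^2 := by positivity
    nlinarith
  refine ⟨hc, hd, ha, hb, k c (a*b*d) hc (by positivity) (by rw [h]; ring), k d (a*b*c) hd (by positivity) (by rw [h]; ring)⟩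

/-- Last step of the descent for `t = 1`. -/
lemma one_step {q u v m n : ℤ} (hq : q ≠ 0) (huv : IsCoprime u v) (h1 : u * v = 2 * (m * n))
    (h2 : u^2 + v^2 = m^2 + n^2) (hquv : q^2 = (u*v)^2) (hv : v % 2 = 0) :
    ∃ p' q' r' s' : ℤ, q' ≠ 0 ∧ q'.natAbs < q.natAbs ∧ IsCoprime p' q' ∧
      p'^2 + q'^2 = r'^2 ∧ p'^2 - 3*q'^2 = s'^2 := by
  obtain ⟨w, rfl⟩ : (2:ℤ) ∣ v := by omega
  have hu0 : u ≠ 0 := by rintro rfl; simp at hquv; exact hq hquv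
  obtain ⟨a, b, c, d, rfl, rfl, rfl, rfl, hbc⟩ := four (by linarith : u * w = m * n) hu0
  obtain ⟨hc, hd, ha, hb, hcl, hdl⟩ := size_lt (a := a) (b := b) (c := c) (d := d) hq (by rw [hquv]; ring)
  have had : IsCoprime a d := huv.of_mul_left_left.of_mul_right_right.of_mul_right_right
  have hu2 : IsCoprime (a*b) 2 := huv.of_mul_right_left
  have hodd : (a * b) % 2 = 1 := by
    obtain ⟨k, l, hkl⟩ := hu2
    rcases Int.emod_two_eq_zero_or_one (a*b) with h | h
    · obtain ⟨z, hz⟩ : (2:ℤ) ∣ a * b := by omega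
      rw [hz] at hkl
      have : 2 * (k * z + l) = 1 := by linarith
      omega
    · exact h
  have hae := sq_mod_facts a
  have hbe := sq_mod_facts b
  have hao : a % 2 = 1 ∧ b % 2 = 1 := by
    rw [Int.mul_emod] at hodd
    rcases Int.emod_two_eq_zero_or_one a with h | h <;> rcases Int.emod_two_eq_zero_or_one b with h' | h' <;> simp [h, h'] at hodd ⊢
  have key : a^2 * (b^2 - c^2) = d^2 * (b^2 - 4*c^2) := by linarith
  obtain ⟨e, he⟩ : a^2 ∣ b^2 - 4*c^2 := (had.pow (m := 2) (n := 2)).dvd_of_dvd_mul_left ⟨_, key.symm⟩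
  have he2 : b^2 - c^2 = e * d^2 := by
    apply mul_left_cancel₀ (pow_ne_zero 2 ha)
    rw [key, he]; ring
  have he1 : b^2 - 4*c^2 = e * a^2 := by rw [he]; ring
  rcases e_cases hbc he1 he2 with rfl | rfl | rfl | rfl
  · refine ⟨d, c, b, a, hc, hcl, ?_, by linarith, by linarith⟩
    have : IsCoprime (d^2) c := by
      have h3 : d^2 = b^2 + (-c) * c := by linarith
      rw [h3]
      exact (hbc.pow_left (m := 2)).add_mul_right_left _
    exact (IsCoprime.pow_left_iff (by norm_num)).1 this
  · omega
  · omega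
  · refine ⟨c, d, a, b, hd, hdl, ?_, by linarith, by linarith⟩
    have : IsCoprime (c^2) d := by
      have h3 : c^2 = a^2 + (-d) * d := by linarith
      rw [h3]
      exact (had.pow_left (m := 2)).add_mul_right_left _
    exact (IsCoprime.pow_left_iff (by norm_num)).1 this

lemma coprime_of_primes {x y : ℤ} (h : ∀ l : ℤ, Prime l → l ∣ x → l ∣ y → False) : IsCoprime x y := by
  by_contra hc
  have hg : Int.gcd x y ≠ 1 := fun hh => hc (Int.isCoprime_iff_gcd_eq_one.2 hh)
  obtain ⟨l, hl, hd⟩ := Nat.exists_prime_and_dvd hg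
  exact h l (Nat.prime_iff_prime_int.1 hl) ((Int.natCast_dvd_natCast.2 hd).trans (Int.gcd_dvd_left x y)) ((Int.natCast_dvd_natCast.2 hd).trans (Int.gcd_dvd_right x y))

lemma one_descent : ∀ N : ℕ, ∀ p q r s : ℤ, q.natAbs = N → IsCoprime p q → p^2 + q^2 = r^2 →
    p^2 - 3*q^2 = s^2 → q = 0 := by
  intro N
  induction N using Nat.strong_induction_on with
  | _ N ih =>
  intro p q r s hN hco hr hs
  by_contra hq
  wlog hrp : 0 ≤ r generalizing r with H
  · exact H (-r) (by rw [hr]; ring) (by linarith)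
  have hrpos : 0 < r := by
    rcases hrp.lt_or_eq with h | h
    · exact h
    · subst h
      have : 0 < q^2 := by positivity
      nlinarith [sq_nonneg p]
  have fp := sq_mod_facts p
  have fq := sq_mod_facts q
  have fr := sq_mod_facts r
  have fs := sq_mod_facts s
  have hpq2 : ¬ (p % 2 = 0 ∧ q % 2 = 0) := by
    rintro ⟨h1, h2⟩
    obtain ⟨x, rfl⟩ : (2:ℤ) ∣ p := by omega
    obtain ⟨y, rfl⟩ : (2:ℤ) ∣ q := by omega
    obtain ⟨k, l, h⟩ := hco
    have : 2 * (k * x + l * y) = 1 := by linarith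
    omega
  have hq2 : q % 2 = 0 := by omega
  have hp2 : p % 2 = 1 := by omega
  have hr2 : r % 2 = 1 := by omega
  have hs2 : s % 2 = 1 := by omega
  have hl : ∀ l : ℤ, Prime l → l ∣ r → l ∣ q → False := by
    intro l hl h1 h2
    have h3 : l ∣ p^2 := by
      have : p^2 = r^2 - q^2 := by linarith
      rw [this]
      exact dvd_sub (dvd_pow h1 (by norm_num)) (dvd_pow h2 (by norm_num))
    exact hl.not_isUnit (hco.isUnit_of_dvd' (hl.dvd_of_dvd_pow h3) h2)
  have hrq : IsCoprime r q := coprime_of_primes hl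
  have hr2c : IsCoprime r 2 := by
    refine ⟨1, -(r/2), by omega⟩
  have hrs : IsCoprime r s := by
    apply coprime_of_primes
    intro l hl h1 h2
    have h3 : l ∣ (2*q)^2 := by
      have : (2*q)^2 = r^2 - s^2 := by linarith
      rw [this]
      exact dvd_sub (dvd_pow h1 (by norm_num)) (dvd_pow h2 (by norm_num))
    exact hl.not_isUnit ((hr2c.mul_right hrq).isUnit_of_dvd' h1 (hl.dvd_of_dvd_pow h3))
  have hrp' : IsCoprime r p := by
    apply coprime_of_primes
    intro l hl' h1 h2
    have h3 : l ∣ q^2 := by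
      have : q^2 = r^2 - p^2 := by linarith
      rw [this]
      exact dvd_sub (dvd_pow h1 (by norm_num)) (dvd_pow h2 (by norm_num))
    exact hl l hl' h1 (hl'.dvd_of_dvd_pow h3)
  obtain ⟨k, hk⟩ : (2:ℤ) ∣ q := by omega
  obtain ⟨x, hx⟩ : (2:ℤ) ∣ r + s := by omega
  obtain ⟨y, hy⟩ : (2:ℤ) ∣ r + p := by omega
  have hk0 : k ≠ 0 := by rintro rfl; exact hq (by simpa using hk)
  obtain ⟨u, v, hu, hv⟩ := split_one (x := x) (y := r - x) (c := q)
    (by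
      have : s = 2*x - r := by linarith
      rw [this] at hs; linarith) hq (by linarith) (half_coprime (r := r) (s := s) (by ring) (by linarith) hrs)
  obtain ⟨m, n, hm, hn⟩ := split_one (x := y) (y := r - y) (c := k)
    (by
      have : p = 2*y - r := by linarith
      rw [this, hk] at hr; linarith) hk0 (by linarith) (half_coprime (r := r) (s := p) (by ring) (by linarith) hrp')
  have huv : IsCoprime u v := by
    have := half_coprime (x := x) (y := r - x) (r := r) (s := s) (by ring) (by linarith) hrs
    rw [hv, hu] at this
    exact (IsCoprime.pow_iff (by norm_num) (by norm_num)).1 this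
  have hquv : q^2 = (u*v)^2 := by
    have : s = 2*x - r := by linarith
    rw [mul_pow, ← hu, ← hv]
    rw [this] at hs; linarith
  have hkmn : k^2 = (m*n)^2 := by
    have : p = 2*y - r := by linarith
    rw [mul_pow, ← hm, ← hn]
    rw [this, hk] at hr; linarith
  have hsum : u^2 + v^2 = m^2 + n^2 := by linarith
  have hprod : (u*v)^2 = (2*(m*n))^2 := by rw [← hquv, hk, mul_pow, hkmn]; ring
  have hfin : ∀ m : ℤ, u^2 + v^2 = m^2 + n^2 → u * v = 2 * (m*n) → False := by
    intro m h2 h1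
    have hev : v % 2 = 0 ∨ u % 2 = 0 := by
      have : (u * v) % 2 = 0 := by omega
      rw [Int.mul_emod] at this
      rcases Int.emod_two_eq_zero_or_one u with h | h <;> rcases Int.emod_two_eq_zero_or_one v with h' | h' <;> simp [h, h'] at this ⊢
    obtain ⟨p', q', r', s', g1, g2, g3, g4, g5⟩ : ∃ p' q' r' s' : ℤ, q' ≠ 0 ∧ q'.natAbs < q.natAbs ∧ IsCoprime p' q' ∧
      p'^2 + q'^2 = r'^2 ∧ p'^2 - 3*q'^2 = s'^2 := by
      rcases hev with h | h
      · exact one_step hq huv h1 h2 hquv h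
      · exact one_step (m := m) (n := n) hq huv.symm (by linarith) (by linarith) (by rw [hquv]; ring) h
    exact g1 (ih _ (by omega) p' q' r' s' rfl g3 g4 g5)
  rcases sq_eq_sq_iff_eq_or_eq_neg.1 hprod with h | h
  · exact hfin m hsum h
  · exact hfin (-m) (by rw [hsum]; ring) (by rw [h]; ring)

lemma mod_three_mul {a b : ℤ} (h : (a * b) % 3 ≠ 0) : a % 3 ≠ 0 ∧ b % 3 ≠ 0 := by
  constructor
  · intro h'; apply h; rw [Int.mul_emod, h']; simp
  · intro h'; apply h; rw [Int.mul_emod, h']; simp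

lemma mod_two_mul {a b : ℤ} (h : (a * b) % 2 = 1) : a % 2 = 1 ∧ b % 2 = 1 := by
  rw [Int.mul_emod] at h
  rcases Int.emod_two_eq_zero_or_one a with h1 | h1 <;>
    rcases Int.emod_two_eq_zero_or_one b with h' | h' <;> simp [h1, h'] at h ⊢

lemma odd_of_coprime_two {a : ℤ} (h : IsCoprime a 2) : a % 2 = 1 := by
  obtain ⟨k, l, hkl⟩ := h
  rcases Int.emod_two_eq_zero_or_one a with h | h
  · obtain ⟨z, hz⟩ : (2:ℤ) ∣ a := by omega
    rw [hz] at hkl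
    have : 2 * (k * z + l) = 1 := by linarith
    omega
  · exact h

lemma coprime_three {a : ℤ} (h : a % 3 ≠ 0) : IsCoprime a 3 := by
  have : a % 3 = 1 ∨ a % 3 = 2 := by omega
  rcases this with h | h
  · exact ⟨1, -(a/3), by omega⟩
  · exact ⟨-1, a/3 + 1, by omega⟩

/-- Last step of the descent for `t = 3`, with `v` even. -/
lemma three_step {q u v m n : ℤ} (hq : q ≠ 0) (huv : IsCoprime u v) (h1 : u * v = 2 * (m * n))
    (h2 : u^2 + 3 * v^2 = m^2 + 3 * n^2) (hquv : q^2 = (u*v)^2) (hv : v % 2 = 0)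
    (hu3 : u % 3 ≠ 0) (hm3 : m % 3 ≠ 0) :
    ∃ p' q' r' s' : ℤ, q' ≠ 0 ∧ q'.natAbs < q.natAbs ∧ IsCoprime p' q' ∧
      p'^2 + 3*q'^2 = r'^2 ∧ p'^2 - 9*q'^2 = s'^2 := by
  obtain ⟨w, rfl⟩ : (2:ℤ) ∣ v := by omega
  have hu0 : u ≠ 0 := by rintro rfl; simp at hu3
  obtain ⟨a, b, c, d, rfl, rfl, rfl, rfl, hbc⟩ := four (by linarith : u * w = m * n) hu0
  obtain ⟨hc, hd, ha, hb, hcl, hdl⟩ := size_lt (a := a) (b := b) (c := c) (d := d) hq (by rw [hquv]; ring)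
  have had : IsCoprime a d := huv.of_mul_left_left.of_mul_right_right.of_mul_right_right
  have hao := mod_two_mul (odd_of_coprime_two huv.of_mul_right_left)
  obtain ⟨ha3, hb3⟩ := mod_three_mul hu3
  obtain ⟨_, hc3⟩ := mod_three_mul hm3
  have hae := sq_mod_facts a
  have hbe := sq_mod_facts b
  have ta := sq_mod_three a
  have tb := sq_mod_three b
  have tc := sq_mod_three c
  have key : a^2 * (b^2 - c^2) = (3 * d^2) * (b^2 - 4*c^2) := by linarith
  have hco : IsCoprime (a^2) (3 * d^2) :=
    ((coprime_three ha3).pow_left).mul_right (had.pow (m := 2) (n := 2))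
  obtain ⟨e, he⟩ : a^2 ∣ b^2 - 4*c^2 := hco.dvd_of_dvd_mul_left ⟨_, key.symm⟩
  have he2 : b^2 - c^2 = e * (3 * d^2) := by
    apply mul_left_cancel₀ (pow_ne_zero 2 ha)
    rw [key, he]; ring
  have he1 : b^2 - 4*c^2 = e * a^2 := by rw [he]; ring
  rcases e_cases hbc he1 he2 with rfl | rfl | rfl | rfl
  · omega
  · omega
  · omega
  · refine ⟨c, d, a, b, hd, hdl, ?_, by linarith, by linarith⟩
    have : IsCoprime (c^2) d := by
      have h3 : c^2 = a^2 + (-3 * d) * d := by linarith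
      rw [h3]
      exact (had.pow_left (m := 2)).add_mul_right_left _
    exact (IsCoprime.pow_left_iff (by norm_num)).1 this

/-- Last step of the descent for `t = 3`, with `u` even. -/
lemma three_step' {u v m n : ℤ} (huv : IsCoprime u v) (h1 : u * v = 2 * (m * n))
    (h2 : u^2 + 3 * v^2 = m^2 + 3 * n^2) (hu : u % 2 = 0)
    (hu3 : u % 3 ≠ 0) (hm3 : m % 3 ≠ 0) : False := by
  obtain ⟨w, rfl⟩ : (2:ℤ) ∣ u := by omega
  have hw0 : w ≠ 0 := by rintro rfl; simp at hu3
  obtain ⟨a, b, c, d, rfl, rfl, rfl, rfl, hbc⟩ := four (by linarith : w * v = m * n) hw0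
  have had : IsCoprime a d := huv.of_mul_left_right.of_mul_left_left.of_mul_right_right
  have hao := mod_two_mul (odd_of_coprime_two huv.of_mul_left_left.symm)
  obtain ⟨ha3, hb3⟩ := mod_three_mul (mod_three_mul hu3).2
  obtain ⟨_, hc3⟩ := mod_three_mul hm3
  have ha : a ≠ 0 := by rintro rfl; simp at ha3
  have fa := sq_mod_facts a
  have fb := sq_mod_facts b
  have fc := sq_mod_facts c
  have fd := sq_mod_facts d
  have ta := sq_mod_three a
  have tb := sq_mod_three b
  have tc := sq_mod_three c
  have key : a^2 * (c^2 - 4*b^2) = (3 * d^2) * (c^2 - b^2) := by linarith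
  have hco : IsCoprime (a^2) (3 * d^2) :=
    ((coprime_three ha3).pow_left).mul_right (had.pow (m := 2) (n := 2))
  obtain ⟨e, he⟩ : a^2 ∣ c^2 - b^2 := hco.dvd_of_dvd_mul_left ⟨_, key.symm⟩
  have he2 : c^2 - 4*b^2 = e * (3 * d^2) := by
    apply mul_left_cancel₀ (pow_ne_zero 2 ha)
    rw [key, he]; ring
  have he1 : c^2 - b^2 = e * a^2 := by rw [he]; ring
  rcases e_cases hbc.symm he2 he1 with rfl | rfl | rfl | rfl
  · clear ta tb tc fa fb; omega
  · clear fa fb fc fd; omega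
  · clear ta tb tc
    have fb' : b % 2 = 0 := by clear fa; omega
    clear fd; omega
  · clear ta tb tc fa fb; omega

/-- `split_three`, with its consequences, in the shape used below. -/
lemma split_three' {r s c : ℤ} (hr : 0 < r) (hc : c ≠ 0) (h : r^2 - s^2 = 12 * c^2)
    (hpar : r % 2 = 1) (hpar' : s % 2 = 1) (hco : IsCoprime r s) :
    ∃ u v : ℤ, r = u^2 + 3*v^2 ∧ c^2 = (u*v)^2 ∧ IsCoprime u v := by
  obtain ⟨x, hx⟩ : (2:ℤ) ∣ r + s := by omega
  obtain ⟨y, hy⟩ : ∃ y, y = r - x := ⟨_, rfl⟩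
  have hxy : IsCoprime x y := half_coprime (r := r) (s := s) (by linarith) (by linarith) hco
  have hr' : r = x + y := by linarith
  have hs' : s = x - y := by linarith
  subst hr' hs'
  have hp : x * y = 3 * c^2 := by linarith
  obtain ⟨u, v, ⟨h1, h2⟩ | ⟨h1, h2⟩⟩ := split_three hp hc hr hxy
  · subst h1 h2
    refine ⟨u, v, by ring, by linarith, ?_⟩
    exact (IsCoprime.pow_iff (by norm_num) (by norm_num)).1 hxy.of_mul_right_right
  · subst h1 h2
    refine ⟨u, v, by ring, by linarith, ?_⟩
    exact ((IsCoprime.pow_iff (by norm_num) (by norm_num)).1 hxy.of_mul_left_right).symm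

lemma three_descent : ∀ N : ℕ, ∀ p q r s : ℤ, q.natAbs = N → IsCoprime p q → p^2 + 3*q^2 = r^2 →
    p^2 - 9*q^2 = s^2 → q = 0 := by
  intro N
  induction N using Nat.strong_induction_on with
  | _ N ih =>
  intro p q r s hN hco hr hs
  by_contra hq
  wlog hrp : 0 ≤ r generalizing r with H
  · exact H (-r) (by rw [hr]; ring) (by linarith)
  have hrpos : 0 < r := by
    rcases hrp.lt_or_eq with h | h
    · exact h
    · subst h
      have : 0 < q^2 := by positivity
      nlinarith [sq_nonneg p]
  have fp := sq_mod_facts p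
  have fq := sq_mod_facts q
  have fr := sq_mod_facts r
  have fs := sq_mod_facts s
  have hpq2 : ¬ (p % 2 = 0 ∧ q % 2 = 0) := by
    rintro ⟨h1, h2⟩
    obtain ⟨x, rfl⟩ : (2:ℤ) ∣ p := by omega
    obtain ⟨y, rfl⟩ : (2:ℤ) ∣ q := by omega
    obtain ⟨k, l, h⟩ := hco
    have : 2 * (k * x + l * y) = 1 := by linarith
    omega
  have hq2 : q % 2 = 0 := by omega
  have hp2 : p % 2 = 1 := by omega
  have hr2 : r % 2 = 1 := by omega
  have hs2 : s % 2 = 1 := by omega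
  have hr3 : r % 3 ≠ 0 := by
    intro h
    have tr := sq_mod_three r
    have tp := sq_mod_three p
    have tq := sq_mod_three q
    obtain ⟨x, rfl⟩ : (3:ℤ) ∣ p := by omega
    obtain ⟨z, rfl⟩ : (3:ℤ) ∣ r := by omega
    obtain ⟨y, rfl⟩ : (3:ℤ) ∣ q := by
      have : q^2 = 3 * (z^2 - x^2) := by linarith
      omega
    obtain ⟨k, l, h⟩ := hco
    have : 3 * (k * x + l * y) = 1 := by linarith
    omega
  have hl : ∀ l : ℤ, Prime l → l ∣ r → l ∣ q → False := by
    intro l hl h1 h2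
    have h3 : l ∣ p^2 := by
      have : p^2 = r^2 - 3*q^2 := by linarith
      rw [this]
      exact dvd_sub (dvd_pow h1 (by norm_num)) ((dvd_pow h2 (by norm_num)).mul_left _)
    exact hl.not_isUnit (hco.isUnit_of_dvd' (hl.dvd_of_dvd_pow h3) h2)
  have hrq : IsCoprime r q := coprime_of_primes hl
  have hr2c : IsCoprime r 2 := by
    refine ⟨1, -(r/2), by omega⟩
  have hr3c : IsCoprime r 3 := coprime_three hr3
  have hrs : IsCoprime r s := by
    apply coprime_of_primes
    intro l hl h1 h2
    have h3 : l ∣ (2*(3*q))^2 := by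
      have : (2*(3*q))^2 = 3*(r^2 - s^2) := by linarith
      rw [this]
      exact (dvd_sub (dvd_pow h1 (by norm_num)) (dvd_pow h2 (by norm_num))).mul_left _
    exact hl.not_isUnit ((hr2c.mul_right (hr3c.mul_right hrq)).isUnit_of_dvd' h1 (hl.dvd_of_dvd_pow h3))
  have hrp' : IsCoprime r p := by
    apply coprime_of_primes
    intro l hl h1 h2
    have h3 : l ∣ (3*q)^2 := by
      have : (3*q)^2 = 3*(r^2 - p^2) := by linarith
      rw [this]
      exact (dvd_sub (dvd_pow h1 (by norm_num)) (dvd_pow h2 (by norm_num))).mul_left _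
    exact hl.not_isUnit ((hr3c.mul_right hrq).isUnit_of_dvd' h1 (hl.dvd_of_dvd_pow h3))
  obtain ⟨k, hk⟩ : (2:ℤ) ∣ q := by omega
  have hk0 : k ≠ 0 := by rintro rfl; exact hq (by simpa using hk)
  obtain ⟨u, v, hu, hquv, huv⟩ := split_three' (c := q) hrpos hq (by linarith) hr2 hs2 hrs
  obtain ⟨m, n, hm, hkmn, hmn⟩ := split_three' (c := k) hrpos hk0 (by rw [← hr, hk]; ring) hr2 hp2 hrp'
  have tu := sq_mod_three u
  have tm := sq_mod_three m
  have hu3 : u % 3 ≠ 0 := by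
    intro h
    have tr := hr3
    omega
  have hm3 : m % 3 ≠ 0 := by
    intro h
    omega
  have hsum : u^2 + 3*v^2 = m^2 + 3*n^2 := by linarith
  have hprod : (u*v)^2 = (2*(m*n))^2 := by rw [← hquv, hk, mul_pow, hkmn]; ring
  have hfin : ∀ m : ℤ, m % 3 ≠ 0 → u^2 + 3*v^2 = m^2 + 3*n^2 → u * v = 2 * (m*n) → False := by
    intro m hm3 h2 h1
    have hev : v % 2 = 0 ∨ u % 2 = 0 := by
      have : (u * v) % 2 = 0 := by omega
      rw [Int.mul_emod] at this
      rcases Int.emod_two_eq_zero_or_one u with h | h <;> rcases Int.emod_two_eq_zero_or_one v with h' | h' <;> simp [h, h'] at this ⊢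
    rcases hev with h | h
    · obtain ⟨p', q', r', s', g1, g2, g3, g4, g5⟩ := three_step hq huv h1 h2 hquv h hu3 hm3
      exact g1 (ih _ (by omega) p' q' r' s' rfl g3 g4 g5)
    · exact three_step' huv h1 h2 h hu3 hm3
  rcases sq_eq_sq_iff_eq_or_eq_neg.1 hprod with h | h
  · exact hfin m hm3 hsum h
  · exact hfin (-m) (by omega) (by rw [hsum]; ring) (by rw [h]; ring)

lemma rat_to_int {t1 t2 : ℤ} {A B C : ℚ} (h1 : A^2 + t1 = B^2) (h2 : A^2 - t2 = C^2) :
    ∃ p q r s : ℤ, q ≠ 0 ∧ IsCoprime p q ∧ p^2 + t1 * q^2 = r^2 ∧ p^2 - t2 * q^2 = s^2 := by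
  have hd : (A.den : ℚ) ≠ 0 := by exact_mod_cast A.den_ne_zero
  have hA : A * A.den = A.num := Rat.mul_den_eq_num A
  have isq : ∀ (z : ℤ) (B : ℚ), (z : ℚ) = B^2 → ∃ r : ℤ, z = r^2 := by
    intro z B h
    have : IsSquare ((z : ℤ) : ℚ) := ⟨B, by rw [h, sq]⟩
    obtain ⟨r, hr⟩ := Rat.isSquare_intCast_iff.1 this
    exact ⟨r, by rw [hr, sq]⟩
  obtain ⟨r, hr⟩ := isq (A.num^2 + t1 * (A.den : ℤ)^2) (B * A.den) (by
    push_cast; rw [← hA]; linear_combination (A.den : ℚ)^2 * h1)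
  obtain ⟨s, hs⟩ := isq (A.num^2 - t2 * (A.den : ℤ)^2) (C * A.den) (by
    push_cast; rw [← hA]; linear_combination (A.den : ℚ)^2 * h2)
  exact ⟨A.num, A.den, r, s, by exact_mod_cast A.den_ne_zero, Rat.isCoprime_num_den A, hr, hs⟩

lemma rat_one {A B C : ℚ} (h1 : A^2 + 1 = B^2) (h2 : A^2 - 3 = C^2) : False := by
  obtain ⟨p, q, r, s, h0, hc, hr, hs⟩ := rat_to_int (t1 := 1) (t2 := 3) (A := A) (B := B) (C := C)
    (by exact_mod_cast h1) (by exact_mod_cast h2)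
  exact h0 (one_descent _ p q r s rfl hc (by linarith) hs)

lemma rat_three {A B C : ℚ} (h1 : A^2 + 3 = B^2) (h2 : A^2 - 9 = C^2) : False := by
  obtain ⟨p, q, r, s, h0, hc, hr, hs⟩ := rat_to_int (t1 := 3) (t2 := 9) (A := A) (B := B) (C := C)
    (by exact_mod_cast h1) (by exact_mod_cast h2)
  exact h0 (three_descent _ p q r s rfl hc hr hs)

lemma curve_one {x y : ℚ} (h : y^2 = x^3 - 2*x^2 - 3*x) : y = 0 := by
  by_contra hy
  refine rat_one (A := (x^2+3)/(2*y)) (B := (x^2+2*x-3)/(2*y)) (C := (x^2-6*x-3)/(2*y)) ?_ ?_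
  · field_simp
    linear_combination 4 * h
  · field_simp
    linear_combination (-12) * h

lemma curve_three {x y : ℚ} (h : 3*y^2 = x^3 - 2*x^2 - 3*x) : y = 0 := by
  by_contra hy
  refine rat_three (A := (x^2+3)/(2*y)) (B := (x^2+2*x-3)/(2*y)) (C := (x^2-6*x-3)/(2*y)) ?_ ?_
  · field_simp
    linear_combination 4 * h
  · field_simp
    linear_combination (-12) * h

open WeierstrassCurve

local notation "K3" => (ℚ⟮Real.sqrt 3⟯)
noncomputable def s3 : K3 := AdjoinSimple.gen ℚ (Real.sqrt 3)
lemma s3_sq : s3^2 = 3 := by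
  apply Subtype.ext
  simp [s3]; rfl
lemma s3_minpoly : minpoly ℚ (Real.sqrt 3) = Polynomial.X^2 - Polynomial.C 3 := by
  symm
  apply minpoly.eq_of_irreducible_of_monic
  · apply Polynomial.irreducible_of_degree_le_three_of_not_isRoot
    · rw [Polynomial.natDegree_X_pow_sub_C]; simp
    · intro x hx
      simp [Polynomial.IsRoot] at hx
      have : IsSquare ((3:ℤ):ℚ) := ⟨x, by push_cast; linarith⟩
      obtain ⟨r, hr⟩ := Rat.isSquare_intCast_iff.1 this
      have : r ≤ 1 := by nlinarith
      have : -1 ≤ r := by nlinarith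
      interval_cases r <;> omega
  · simp
  · exact Polynomial.monic_X_pow_sub_C _ (by norm_num)
lemma s3_int : IsIntegral ℚ (Real.sqrt 3) := by
  refine ⟨Polynomial.X^2 - Polynomial.C 3, Polynomial.monic_X_pow_sub_C _ (by norm_num), by simp⟩
lemma exists_rep (z : K3) : ∃ a b : ℚ, z = algebraMap ℚ K3 a + algebraMap ℚ K3 b * s3 := by
  obtain ⟨f, hf, hz⟩ := (adjoin.powerBasis s3_int).exists_eq_aeval z
  rw [adjoin.powerBasis_dim, s3_minpoly, Polynomial.natDegree_X_pow_sub_C] at hf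
  obtain ⟨b, a, rfl⟩ := Polynomial.exists_eq_X_add_C_of_natDegree_le_one (by omega : f.natDegree ≤ 1)
  refine ⟨a, b, ?_⟩
  rw [hz, adjoin.powerBasis_gen]
  simp [s3]; ring
lemma exists_conj : ∃ σ : K3 →ₐ[ℚ] K3, σ s3 = -s3 := by
  refine ⟨(adjoin.powerBasis s3_int).lift (-s3) ?_, ?_⟩
  · rw [adjoin.powerBasis_gen, minpoly_gen, s3_minpoly]
    simp [s3_sq]
  · have := (adjoin.powerBasis s3_int).lift_gen (-s3) (by
      rw [adjoin.powerBasis_gen, minpoly_gen, s3_minpoly]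
      simp [s3_sq])
    exact this
lemma s3_ne : s3 ≠ 0 := by
  intro h
  have := s3_sq
  rw [h] at this
  norm_num at this
lemma conj_fix {σ : K3 →ₐ[ℚ] K3} (hσ : σ s3 = -s3) {z : K3} (h : σ z = z) : ∃ a : ℚ, z = algebraMap ℚ K3 a := by
  obtain ⟨a, b, rfl⟩ := exists_rep z
  refine ⟨a, ?_⟩
  simp only [map_add, map_mul, AlgHom.commutes, hσ] at h
  linear_combination (-1/2:K3) * h
lemma conj_neg {σ : K3 →ₐ[ℚ] K3} (hσ : σ s3 = -s3) {z : K3} (h : σ z = -z) : ∃ b : ℚ, z = algebraMap ℚ K3 b * s3 := by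
  obtain ⟨a, b, rfl⟩ := exists_rep z
  refine ⟨b, ?_⟩
  simp only [map_add, map_mul, AlgHom.commutes, hσ] at h
  linear_combination (1/2:K3) * h

def W0 : WeierstrassCurve.Affine ℚ := { a₁ := 0, a₂ := -2, a₃ := 0, a₄ := -3, a₆ := 0 }

local notation "WK" => (WeierstrassCurve.Affine.baseChange W0 K3)

lemma W0_eq {x y : K3} (h : (WK).Nonsingular x y) : y^2 = x^3 - 2*x^2 - 3*x := by
  have := (Affine.equation_iff _ _).1 h.1
  simp [W0] at this
  linear_combination this
lemma W0_negY (x y : K3) : (WK).negY x y = -y := by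
  simp [Affine.negY, W0]
lemma two_zero {x y : K3} (h : (WK).Nonsingular x y) (hy : y = 0) : 
    (2:ℕ) • (Affine.Point.some x y h) = 0 := by
  rw [two_nsmul, add_eq_zero_iff_eq_neg, Affine.Point.neg_some]
  simp [W0, hy]

lemma two_fixed {σ : K3 →ₐ[ℚ] K3} (hσ : σ s3 = -s3) (P : (WK).Point) (h : Affine.Point.map σ P = P) :
    2 • P = 0 := by
  rcases P with _ | ⟨x, y, hP⟩
  · exact smul_zero _
  · rw [Affine.Point.map_some, Affine.Point.some.injEq] at h
    obtain ⟨a, rfl⟩ := conj_fix hσ h.1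
    obtain ⟨b, rfl⟩ := conj_fix hσ h.2
    have e := W0_eq hP
    have e2 : b^2 = a^3 - 2*a^2 - 3*a := by
      apply (algebraMap ℚ K3).injective
      simpa using e
    exact two_zero _ (by rw [curve_one e2]; simp)

lemma two_anti {σ : K3 →ₐ[ℚ] K3} (hσ : σ s3 = -s3) (P : (WK).Point) (h : Affine.Point.map σ P = -P) :
    2 • P = 0 := by
  rcases P with _ | ⟨x, y, hP⟩
  · exact smul_zero _
  · rw [Affine.Point.map_some, Affine.Point.neg_some, Affine.Point.some.injEq, W0_negY] at h
    obtain ⟨a, rfl⟩ := conj_fix hσ h.1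
    obtain ⟨b, rfl⟩ := conj_neg hσ h.2
    have e := W0_eq hP
    have e2 : 3*b^2 = a^3 - 2*a^2 - 3*a := by
      apply (algebraMap ℚ K3).injective
      rw [mul_pow, s3_sq] at e
      simpa [mul_comm] using e
    exact two_zero _ (by rw [curve_three e2]; simp)

lemma four_zero (P : (WK).Point) : 4 • P = 0 := by
  obtain ⟨σ, hσ⟩ := exists_conj
  have hσσ : σ.comp σ = AlgHom.id ℚ K3 := by
    apply AlgHom.ext
    intro z
    obtain ⟨a, b, rfl⟩ := exists_rep z
    simp [hσ]
  have inv : Affine.Point.map σ (Affine.Point.map σ P) = P := by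
    rcases P with _ | ⟨x, y, hP⟩
    · rfl
    · rw [Affine.Point.map_some, Affine.Point.map_some, Affine.Point.some.injEq]
      exact ⟨DFunLike.congr_fun hσσ x, DFunLike.congr_fun hσσ y⟩
  have h1 := two_fixed hσ (P + Affine.Point.map σ P) (by rw [map_add, inv, add_comm])
  have h2 := two_anti hσ (P - Affine.Point.map σ P) (by rw [map_sub, inv, neg_sub])
  calc 4 • P = 2 • (P + Affine.Point.map σ P) + 2 • (P - Affine.Point.map σ P) := by abel
    _ = 0 := by rw [h1, h2, add_zero]

lemma W0_ns {x y : K3} (h : y^2 = x^3 - 2*x^2 - 3*x) (hy : y ≠ 0) : (WK).Nonsingular x y := by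
  rw [Affine.nonsingular_iff, Affine.equation_iff]
  constructor
  · simp [W0]; linear_combination h
  · right
    simp [W0]
    intro h'
    apply hy
    linear_combination (1/2 : K3) * h'

lemma exists_pt : ∃ P : (WK).Point, 2 • P ≠ 0 := by
  have hy : 6 + 4 * s3 ≠ 0 := by
    intro h
    have h2 : (12 : K3) = 0 := by linear_combination (4 * s3 - 6) * h - 16 * s3_sq
    norm_num at h2
  refine ⟨.some (3 + 2*s3) (6+4*s3) (W0_ns ?_ hy), ?_⟩
  · linear_combination (-12 - 8 * s3) * s3_sq
  · rw [two_nsmul, Ne, add_eq_zero_iff_eq_neg, Affine.Point.neg_some, Affine.Point.some.injEq, W0_negY]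
    rintro ⟨_, h⟩
    apply hy
    linear_combination (1/2 : K3) * h

/-- Over `K = ℚ(√3)`, the elliptic curve `E : y² = x³ − 2x² − 3x = x(x+1)(x−3)`
has a `K`-point `P` with `2P ≠ 0`, but every `K`-point has finite order. Hence `n = 1` is
`(ℚ(√3), 2π/3)`-congruent but not properly `(ℚ(√3), 2π/3)`-congruent. -/
theorem one_is_congruent_but_not_properly_over_sqrt_three
    (W : WeierstrassCurve.Affine ℚ⟮Real.sqrt 3⟯)
    (hW : W = { a₁ := 0, a₂ := -2, a₃ := 0, a₄ := -3, a₆ := 0 }) :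
    (∃ P : W.Point, 2 • P ≠ 0) ∧ (∀ P : W.Point, IsOfFinAddOrder P) := by
  have hW' : W = WK := by
    rw [hW]
    ext <;> simp [W0]
  clear hW
  subst hW'
  exact ⟨exists_pt, fun P => isOfFinAddOrder_iff_nsmul_eq_zero.2 ⟨4, by norm_num, four_zero P⟩⟩
end

section
/- Let K = ℚ(√13) and let E be the elliptic curve over K given by y² = x(x + 9)(x − 3). Then E(K) contains a point of infinite order; that is, n = 3 is a properly (ℚ(√13), π/3)-congruent number. Moreover, the elements u = √13/2, v = 24√13/13, w = 43√13/26 of K satisfy w² = u² + v² − uv and uv = 12, so (u, v, w) is a (ℚ(√13), π/3)-triangle of area 3√3. -/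
open IntermediateField

open WeierstrassCurve.Affine in
/-- The invariant: the `x`-coordinate is `a / (4 ^ (k + 2) * b)` with `a`, `b` odd integers. -/
def HasDenom {K : Type*} [Field K] {W : WeierstrassCurve.Affine K} (k : ℕ) (P : W.Point) : Prop :=
  ∃ (a b : ℤ) (x y : K) (h : W.Nonsingular x y), Odd a ∧ Odd b ∧
    x * ((4 ^ (k + 2) * b : ℤ) : K) = (a : K) ∧ P = Point.some x y h

open WeierstrassCurve.Affine in
theorem HasDenom.double {K : Type*} [Field K] [CharZero K] [DecidableEq K]
    {W : WeierstrassCurve.Affine K}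
    (h1 : W.a₁ = 0) (h2 : W.a₂ = 6) (h3 : W.a₃ = 0) (h4 : W.a₄ = -27) (h6 : W.a₆ = 0)
    {k : ℕ} {P : W.Point} (hP : HasDenom k P) : HasDenom (k + 1) (P + P) := by
  obtain ⟨a, b, x, y, h, ha, hb, hx, rfl⟩ := hP
  obtain ⟨B, hB⟩ : ∃ B : ℤ, B = 4 ^ (k + 2) * b := ⟨_, rfl⟩
  have hBe : Even B := by
    rw [hB]
    exact (Even.pow_of_ne_zero (by decide) (by omega)).mul_right b
  have hB0 : B ≠ 0 := by
    rw [hB]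
    refine mul_ne_zero (by positivity) ?_
    rintro rfl
    exact absurd hb (by decide)
  have o1 : Odd (a + 9 * B) := ha.add_even (hBe.mul_left 9)
  have o2 : Odd (a - 3 * B) := ha.sub_even (hBe.mul_left 3)
  have odd_ne : ∀ z : ℤ, Odd z → z ≠ 0 := by
    rintro z hz rfl
    exact absurd hz (by decide)
  rw [← hB] at hx
  have hB0' : (B : K) ≠ 0 := by exact_mod_cast hB0
  have ha0 : (a : K) ≠ 0 := by exact_mod_cast odd_ne a ha
  have e1 : (a : K) + 9 * B ≠ 0 := by exact_mod_cast odd_ne _ o1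
  have e2 : (a : K) - 3 * B ≠ 0 := by exact_mod_cast odd_ne _ o2
  have heq : y ^ 2 = x ^ 3 + 6 * x ^ 2 - 27 * x := by
    have := (W.equation_iff x y).1 h.1
    rw [h1, h2, h3, h4, h6] at this
    linear_combination this
  have hyB : y ^ 2 * (B : K) ^ 3 = a * (a + 9 * B) * (a - 3 * B) := by
    rw [heq, ← hx]; ring
  have hy0 : y ≠ 0 := by
    rintro rfl
    apply mul_ne_zero (mul_ne_zero ha0 e1) e2
    rw [← hyB]; ring
  have hyn : y ≠ W.negY x y := by
    rw [negY, h1, h3]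
    intro hh
    apply hy0
    have : 2 * y = 0 := by linear_combination hh
    simpa using this
  refine ⟨(a ^ 2 + 27 * B ^ 2) ^ 2, b * a * (a + 9 * B) * (a - 3 * B), _, _, _, ?_, ?_, ?_,
    Point.add_self_of_Y_ne hyn⟩
  · exact (ha.pow.add_even ((hBe.pow_of_ne_zero (by decide)).mul_left 27)).pow
  · exact ((hb.mul ha).mul o1).mul o2
  · have key : (4 ^ (k + 1 + 2) * (b * a * (a + 9 * B) * (a - 3 * B)) : ℤ)
        = 4 * B * (a * (a + 9 * B) * (a - 3 * B)) := by
      rw [hB]; ring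
    have hX : W.addX x x (W.slope x x y y) * (4 * y ^ 2) = (x ^ 2 + 27) ^ 2 := by
      rw [slope_of_Y_ne rfl hyn, addX, negY, h1, h2, h3, h4]
      have h2y : y - (-y - 0 * x - 0) = 2 * y := by ring
      rw [h2y]
      field_simp
      rw [heq]
      ring
    rw [key]
    push_cast
    rw [← hyB, ← hx]
    linear_combination (B : K) ^ 4 * hX

open WeierstrassCurve.Affine in
theorem HasDenom.not_lt {K : Type*} [Field K] [CharZero K]
    {W : WeierstrassCurve.Affine K} {i j : ℕ} {P : W.Point}
    (hi : HasDenom i P) (hj : HasDenom j P) : ¬ i < j := by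
  intro hij
  obtain ⟨a, b, x, y, h, ha, hb, hx, rfl⟩ := hi
  obtain ⟨a', b', x', y', h', ha', hb', hx', he⟩ := hj
  simp only [Point.some.injEq] at he
  obtain ⟨rfl, -⟩ := he
  obtain ⟨c, rfl⟩ := Nat.exists_eq_add_of_lt hij
  have hz : (a' * b : ℤ) = 4 * (4 ^ c * b' * a) := by
    have : (a' * b : K) = 4 * (4 ^ c * b' * a) := by
      rw [← hx, ← hx']; push_cast; ring
    exact_mod_cast this
  have : Odd (a' * b) := ha'.mul hb
  rw [hz, ← Int.not_even_iff_odd] at this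
  exact this (Even.mul_right (by decide) _)

theorem HasDenom.not_isOfFinAddOrder {K : Type*} [Field K] [CharZero K] [DecidableEq K]
    {W : WeierstrassCurve.Affine K}
    (h1 : W.a₁ = 0) (h2 : W.a₂ = 6) (h3 : W.a₃ = 0) (h4 : W.a₄ = -27) (h6 : W.a₆ = 0)
    {P : W.Point} (hP : HasDenom 0 P) : ¬ IsOfFinAddOrder P := by
  have hk : ∀ k : ℕ, HasDenom k (2 ^ k • P) := by
    intro k
    induction k with
    | zero => simpa using hP
    | succ k ih =>
      have := ih.double h1 h2 h3 h4 h6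
      rwa [← two_nsmul, ← mul_nsmul', ← pow_succ'] at this
  intro hfin
  have hinj : Function.Injective (fun k : ℕ => 2 ^ k • P) := by
    intro i j hij
    have hi := hk i
    have hj := hk j
    simp only at hij
    rw [hij] at hi
    exact le_antisymm (_root_.not_lt.1 (hj.not_lt hi)) (_root_.not_lt.1 (hi.not_lt hj))
  refine Set.infinite_range_of_injective hinj (hfin.finite_multiples.subset ?_)
  rintro _ ⟨k, rfl⟩
  exact ⟨2 ^ k, rfl⟩

/-- Over `K = ℚ(√13)`, the elliptic curve `E : y² = x(x + 9)(x − 3)` has a point of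
infinite order, i.e. `n = 3` is properly `(ℚ(√13), π/3)`-congruent; moreover the elements
`u = √13/2`, `v = 24√13/13`, `w = 43√13/26` of `K` satisfy `w² = u² + v² − uv` and `uv = 12`,
so `(u, v, w)` is a `(ℚ(√13), π/3)`-triangle of area `3√3`. -/
theorem three_is_properly_congruent_over_sqrt_thirteen
    (W : WeierstrassCurve.Affine ℚ⟮Real.sqrt 13⟯)
    (hW : W = { a₁ := 0, a₂ := 9 - 3, a₃ := 0, a₄ := -(9 * 3), a₆ := 0 })
    (σ : ℚ⟮Real.sqrt 13⟯) (hσ : (σ : ℝ) = Real.sqrt 13)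
    (u v w : ℚ⟮Real.sqrt 13⟯)
    (hu : u = σ / 2) (hv : v = 24 * σ / 13) (hw : w = 43 * σ / 26) :
    (∃ P : W.Point, ¬ IsOfFinAddOrder P) ∧
      w ^ 2 = u ^ 2 + v ^ 2 - u * v ∧ u * v = 12 := by
  have hs : σ ^ 2 = 13 := by
    apply Subtype.ext
    push_cast
    rw [hσ]
    exact Real.sq_sqrt (by norm_num)
  refine ⟨?_, ?_, ?_⟩
  · have h1 : W.a₁ = 0 := by rw [hW]
    have h2 : W.a₂ = 6 := by rw [hW]; norm_num
    have h3 : W.a₃ = 0 := by rw [hW]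
    have h4 : W.a₄ = -27 := by rw [hW]; norm_num
    have h6 : W.a₆ = 0 := by rw [hW]
    have hns : W.Nonsingular (1849 / 208) (91805 / 10816 * σ) := by
      rw [WeierstrassCurve.Affine.nonsingular_iff, WeierstrassCurve.Affine.equation_iff,
        h1, h2, h3, h4, h6]
      refine ⟨by linear_combination (91805 / 10816) ^ 2 * hs, Or.inl ?_⟩
      norm_num
    refine ⟨.some _ _ hns, HasDenom.not_isOfFinAddOrder h1 h2 h3 h4 h6
      ⟨1849, 13, _, _, hns, by decide, by decide, ?_, rfl⟩⟩
    norm_num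
  · rw [hw, hu, hv]
    linear_combination ((43 / 26) ^ 2 - (1 / 2) ^ 2 - (24 / 13) ^ 2 + 12 / 13) * hs
  · rw [hu, hv]
    linear_combination 12 / 13 * hs
end

section
/- Let K = ℚ(√7) and let E be the elliptic curve over K given by y² = x³ − 4x² − 12x = x(x + 2)(x − 6). Then E(K) contains a point of infinite order; that is, n = 2 is a properly (ℚ(√7), 2π/3)-congruent number. Moreover, the elements u = 3√7/7, v = 8√7/3, w = 61√7/21 of K satisfy w² = u² + v² + uv and uv = 8, so (u, v, w) is a (ℚ(√7), 2π/3)-triangle of area 2√3. -/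
open IntermediateField

/-- `P` is an affine point whose `x`-coordinate is rational of 2-adic valuation `-2(k+1)`. -/
def GoodPt {F : Type*} [Field F] (W : WeierstrassCurve.Affine F) (k : ℕ) (P : W.Point) : Prop :=
  ∃ (x y : F) (h : W.Nonsingular x y), P = .some x y h ∧
    ∃ a b : ℤ, Odd a ∧ Odd b ∧ x * (4 ^ (k + 1) * b) = a

theorem GoodPt.double {F : Type*} [Field F] [CharZero F] [DecidableEq F]
    (W : WeierstrassCurve.Affine F)
    (hW : W = { a₁ := 0, a₂ := -4, a₃ := 0, a₄ := -12, a₆ := 0 })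
    (k : ℕ) (P : W.Point) (hP : GoodPt W k P) : GoodPt W (k + 1) (P + P) := by
  obtain ⟨x, y, h, rfl, a, b, ha, hb, hx⟩ := hP
  have heq : y ^ 2 = x ^ 3 - 4 * x ^ 2 - 12 * x := by
    have := (WeierstrassCurve.Affine.equation_iff x y).1 h.1
    rw [hW] at this
    linear_combination this
  set d : ℤ := 4 ^ (k + 1) * b with hd
  have hde : Even d := by
    rw [hd, pow_succ]
    exact (Even.mul_left (by decide) _).mul_right _
  have hxd : x * (d : F) = a := by rw [hd]; push_cast; exact hx
  have h1 : Odd (a + 2 * d) := ha.add_even (even_two_mul d)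
  have h2 : Odd (a - 6 * d) := ha.sub_even (hde.mul_left 6)
  have hb0 : b ≠ 0 := by rintro rfl; simp at hb
  have hd0 : (d : F) ≠ 0 := by
    rw [hd]; push_cast
    exact mul_ne_zero (pow_ne_zero _ (by norm_num)) (by exact_mod_cast hb0)
  have oddne : ∀ z : ℤ, Odd z → (z : F) ≠ 0 := by
    intro z hz h0
    have : z = 0 := by exact_mod_cast h0
    subst this; simp at hz
  have key : y ^ 2 * (d : F) ^ 3 = a * (a + 2 * d : ℤ) * (a - 6 * d : ℤ) := by
    push_cast
    rw [heq, ← hxd]; ring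
  have hy : y ≠ 0 := by
    rintro rfl
    have : (a : F) * (a + 2 * d : ℤ) * (a - 6 * d : ℤ) ≠ 0 :=
      mul_ne_zero (mul_ne_zero (oddne _ ha) (oddne _ h1)) (oddne _ h2)
    apply this; rw [← key]; ring
  have hyn : W.negY x y = -y := by
    rw [hW]; simp [WeierstrassCurve.Affine.negY]
  have hne : y ≠ W.negY x y := by
    rw [hyn]; intro h0
    apply hy
    have : (2 : F) * y = 0 := by linear_combination h0
    simpa using this
  refine ⟨_, _, _, WeierstrassCurve.Affine.Point.add_self_of_Y_ne hne,
    (a ^ 2 + 12 * d ^ 2) ^ 2, b * a * (a + 2 * d) * (a - 6 * d), ?_, ?_, ?_⟩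
  · exact ((ha.pow).add_even ((hde.pow_of_ne_zero two_ne_zero).mul_left 12)).pow
  · exact ((hb.mul ha).mul h1).mul h2
  · rw [WeierstrassCurve.Affine.slope_of_Y_ne rfl hne, hyn]
    have hX : W.addX x x ((3 * x ^ 2 + 2 * W.a₂ * x + W.a₄ - W.a₁ * y) / (y - -y)) * (4 * y ^ 2)
        = (x ^ 2 + 12) ^ 2 := by
      rw [hW]
      simp only [WeierstrassCurve.Affine.addX]
      have : y - -y = 2 * y := by ring
      rw [this]
      field_simp
      rw [heq]
      ring
    have e : ((4 : F) ^ (k + 1 + 1) * ((b * a * (a + 2 * d) * (a - 6 * d) : ℤ) : F))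
        = 4 * y ^ 2 * (d : F) ^ 4 := by
      have : (4 : F) * y ^ 2 * (d : F) ^ 4 = 4 * d * (y ^ 2 * (d : F) ^ 3) := by ring
      rw [this, key, hd]; push_cast; ring
    rw [e, ← mul_assoc, hX]
    push_cast
    rw [← hxd]; ring

theorem GoodPt.index_le {F : Type*} [Field F] [CharZero F] (W : WeierstrassCurve.Affine F)
    (j k : ℕ) (P : W.Point) (h1 : GoodPt W j P) (h2 : GoodPt W k P) : k ≤ j := by
  obtain ⟨x, y, h, rfl, a, b, ha, hb, hx⟩ := h1
  obtain ⟨x', y', h', he, a', b', ha', hb', hx'⟩ := h2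
  obtain ⟨rfl, rfl⟩ := WeierstrassCurve.Affine.Point.some.inj he
  by_contra! hlt
  obtain ⟨m, rfl⟩ := Nat.exists_eq_add_of_lt hlt
  have e : (a * b' * 4 ^ (m + 1) : ℤ) = a' * b := by
    have : ((a * b' * 4 ^ (m + 1) : ℤ) : F) = ((a' * b : ℤ) : F) := by
      push_cast
      rw [← hx, ← hx']; ring
    exact_mod_cast this
  have ho := ha'.mul hb
  rw [← e, ← Int.not_even_iff_odd, pow_succ] at ho
  exact ho ((Even.mul_left (by decide) _).mul_left _)

theorem GoodPt.not_fin {F : Type*} [Field F] [CharZero F] [DecidableEq F]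
    (W : WeierstrassCurve.Affine F)
    (hW : W = { a₁ := 0, a₂ := -4, a₃ := 0, a₄ := -12, a₆ := 0 })
    (P : W.Point) (hP : GoodPt W 0 P) : ¬ IsOfFinAddOrder P := by
  intro hf
  have hall : ∀ k : ℕ, GoodPt W k ((2 ^ k : ℕ) • P) := by
    intro k
    induction k with
    | zero => simpa using hP
    | succ k ih =>
      have := GoodPt.double W hW k _ ih
      rwa [← two_nsmul, ← mul_nsmul', ← pow_succ'] at this
  have hinj : Function.Injective fun k : ℕ => (2 ^ k : ℕ) • P := by
    intro i j hij
    have hij' : (2 ^ i : ℕ) • P = (2 ^ j : ℕ) • P := hij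
    have hi := hall i
    have hj := hall j
    rw [← hij'] at hj
    exact le_antisymm (GoodPt.index_le W _ _ _ hj hi) (GoodPt.index_le W _ _ _ hi hj)
  have hfin : (AddSubmonoid.multiples P : Set W.Point).Finite := finite_multiples.2 hf
  exact Set.infinite_of_injective_forall_mem hinj
    (fun k => (⟨2 ^ k, rfl⟩ : (2 ^ k : ℕ) • P ∈ (AddSubmonoid.multiples P : Set W.Point))) hfin



/-- Over `K = ℚ(√7)`, the elliptic curve `E : y² = x³ − 4x² − 12x = x(x+2)(x−6)`
has a point of infinite order, i.e. `n = 2` is properly `(ℚ(√7), 2π/3)`-congruent; moreover the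
elements `u = 3√7/7`, `v = 8√7/3`, `w = 61√7/21` of `K` satisfy `w² = u² + v² + uv` and `uv = 8`,
so `(u, v, w)` is a `(ℚ(√7), 2π/3)`-triangle of area `2√3`. -/
theorem two_is_properly_congruent_over_sqrt_seven
    (W : WeierstrassCurve.Affine ℚ⟮Real.sqrt 7⟯)
    (hW : W = { a₁ := 0, a₂ := -4, a₃ := 0, a₄ := -12, a₆ := 0 })
    (σ : ℚ⟮Real.sqrt 7⟯) (hσ : (σ : ℝ) = Real.sqrt 7)
    (u v w : ℚ⟮Real.sqrt 7⟯)
    (hu : u = 3 * σ / 7) (hv : v = 8 * σ / 3) (hw : w = 61 * σ / 21) :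
    (∃ P : W.Point, ¬ IsOfFinAddOrder P) ∧
      w ^ 2 = u ^ 2 + v ^ 2 + u * v ∧ u * v = 8 := by
  have hs : σ ^ 2 = 7 := by
    apply Subtype.ext
    push_cast
    rw [hσ]
    exact Real.sq_sqrt (by norm_num)
  have hs0 : σ ≠ 0 := by
    rintro rfl
    norm_num at hs
  refine ⟨?_, ?_, ?_⟩
  · have hE : W.Nonsingular (3721 / 252) (186355 * σ / 10584) := by
      rw [WeierstrassCurve.Affine.nonsingular_iff, WeierstrassCurve.Affine.equation_iff, hW]
      refine ⟨?_, Or.inr ?_⟩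
      · linear_combination (186355 / 10584) ^ 2 * hs
      · intro h
        apply hs0
        linear_combination (10584 / (2 * 186355)) * h
    refine ⟨.some _ _ hE, GoodPt.not_fin W hW _ ⟨_, _, hE, rfl, 3721, 63, by decide, by decide, ?_⟩⟩
    push_cast
    norm_num
  · rw [hu, hv, hw]
    linear_combination ((61 / 21) ^ 2 - (3 / 7) ^ 2 - (8 / 3) ^ 2 - 8 / 7) * hs
  · rw [hu, hv]
    linear_combination (8 / 7) * hs
end

section
/- Let K = ℚ(√5) and let E be the elliptic curve over K given by y² = x³ + 12x² − 108x = x(x + 18)(x − 6). Then E(K) contains a point of infinite order; that is, n = 6 is a properly (ℚ(√5), π/3)-congruent number. -/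
open IntermediateField

/-- The curve `y² = x³ + 12x² − 108x` over a field `F`. -/
def curveSix (F : Type*) [Field F] : WeierstrassCurve.Affine F :=
  { a₁ := 0, a₂ := 12, a₃ := 0, a₄ := -108, a₆ := 0 }

/-- The point `P` has rational `x`-coordinate with exact denominator exponent `k` at `2`. -/
def DenExp {F : Type*} [Field F] (k : ℕ) (P : (curveSix F).Point) : Prop :=
  ∃ x y h, P = WeierstrassCurve.Affine.Point.some x y h ∧
    ∃ a c : ℤ, Odd a ∧ Odd c ∧ x * (2 ^ k * (c : F)) = a

lemma DenExp.double {F : Type*} [Field F] [CharZero F] [DecidableEq F] {k : ℕ} (hk : 1 ≤ k)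
    {P : (curveSix F).Point} (hP : DenExp k P) : DenExp (k + 2) (P + P) := by
  obtain ⟨x, y, h, rfl, a, c, ha, hc, hx⟩ := hP
  obtain ⟨j, rfl⟩ : ∃ j, k = j + 1 := ⟨k - 1, by omega⟩
  have heq : y ^ 2 = x ^ 3 + 12 * x ^ 2 - 108 * x := by
    have := (WeierstrassCurve.Affine.equation_iff _ _).1 h.1
    simp only [curveSix] at this
    linear_combination this
  have hbe : Even (2 ^ (j + 1) * c) := by
    rw [pow_succ]; exact ⟨2 ^ j * c, by ring⟩
  obtain ⟨b, hb⟩ : ∃ b : ℤ, b = 2 ^ (j + 1) * c := ⟨_, rfl⟩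
  rw [← hb] at hbe
  have o1 : Odd (a + 18 * b) := ha.add_even (hbe.mul_left _)
  have o2 : Odd (a - 6 * b) := ha.sub_even (hbe.mul_left _)
  have nz : ∀ {m : ℤ}, Odd m → (m : F) ≠ 0 := fun {m} hm h0 => by
    have : m = 0 := by exact_mod_cast h0
    subst this
    simp at hm
  have hbF : (b : F) = 2 ^ (j + 1) * c := by rw [hb]; push_cast; ring
  have hb0 : (b : F) ≠ 0 := by
    rw [hbF]; exact mul_ne_zero (pow_ne_zero _ two_ne_zero) (nz hc)
  rw [← hbF] at hx
  have n0 := nz ha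
  have n1 := nz o1
  have n2 := nz o2
  push_cast at n1 n2
  have hxa : x = a / b := by rw [eq_div_iff hb0, hx]
  have hy2 : y ^ 2 * b ^ 3 = a * (a + 18 * b) * (a - 6 * b) := by
    rw [heq, hxa]; field_simp; ring
  have hy0 : y ≠ 0 := by
    rintro rfl
    have : (a : F) * (a + 18 * b) * (a - 6 * b) = 0 := by rw [← hy2]; ring
    exact (mul_ne_zero (mul_ne_zero n0 n1) n2) this
  have hyne : y ≠ (curveSix F).negY x y := by
    intro e
    simp only [WeierstrassCurve.Affine.negY, curveSix] at e
    have : 2 * y = 0 := by linear_combination e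
    simp [hy0] at this
  refine ⟨_, _, _, WeierstrassCurve.Affine.Point.add_self_of_Y_ne hyne,
    (a ^ 2 + 108 * b ^ 2) ^ 2, a * c * (a + 18 * b) * (a - 6 * b), ?_, ?_, ?_⟩
  · exact ((ha.pow).add_even ((hbe.pow_of_ne_zero two_ne_zero).mul_left _)).pow
  · exact ((ha.mul hc).mul o1).mul o2
  · rw [WeierstrassCurve.Affine.slope_of_Y_ne rfl hyne]
    have hX : (curveSix F).addX x x ((3 * x ^ 2 + 2 * (curveSix F).a₂ * x + (curveSix F).a₄ -
        (curveSix F).a₁ * y) / (y - (curveSix F).negY x y)) * (4 * y ^ 2) = (x ^ 2 + 108) ^ 2 := by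
      simp only [WeierstrassCurve.Affine.addX, WeierstrassCurve.Affine.negY, curveSix]
      have e : y - (-y - 0 * x - 0) = 2 * y := by ring
      rw [e]
      field_simp
      rw [heq]
      ring
    generalize (curveSix F).addX x x _ = X at hX ⊢
    push_cast
    have e : X * (2 ^ (j + 1 + 2) * (a * c * (a + 18 * b) * (a - 6 * b))) =
        X * (4 * y ^ 2) * b ^ 4 := by
      have : (2 : F) ^ (j + 1 + 2) * (a * c * (a + 18 * b) * (a - 6 * b)) =
        4 * (2 ^ (j + 1) * c) * (a * (a + 18 * b) * (a - 6 * b)) := by ring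
      rw [this, ← hy2, ← hbF]; ring
    rw [e, hX, ← hx]; ring

lemma DenExp.not_lt {F : Type*} [Field F] [CharZero F] {k l : ℕ}
    {P : (curveSix F).Point} (hk : DenExp k P) (hl : DenExp l P) : ¬ k < l := by
  intro hlt
  obtain ⟨x, y, h, rfl, a, c, ha, hc, hx⟩ := hk
  obtain ⟨x', y', h', e, a', c', ha', hc', hx'⟩ := hl
  rw [WeierstrassCurve.Affine.Point.some.injEq] at e
  obtain ⟨rfl, rfl⟩ := e
  obtain ⟨d, rfl⟩ : ∃ d, l = k + 1 + d := ⟨l - (k + 1), by omega⟩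
  have e1 : (a * (2 * (2 ^ d * c')) : F) = a' * c := by
    rw [← hx, ← hx']; ring
  have e2 : a * (2 * (2 ^ d * c')) = a' * c := by exact_mod_cast e1
  have o := ha'.mul hc
  rw [← e2, ← Int.not_even_iff_odd] at o
  exact o ((even_two_mul _).mul_left _)

lemma curveSix_infinite (F : Type*) [Field F] [CharZero F] [DecidableEq F] :
    ∃ P : (curveSix F).Point, ¬ IsOfFinAddOrder P := by
  have hns : (curveSix F).Nonsingular (49 / 4) (385 / 8) := by
    rw [WeierstrassCurve.Affine.nonsingular_iff', WeierstrassCurve.Affine.equation_iff]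
    simp only [curveSix]
    constructor
    · norm_num
    · right; norm_num
  refine ⟨.some _ _ hns, fun hfin => ?_⟩
  set P : (curveSix F).Point := .some _ _ hns with hPdef
  have key : ∀ n : ℕ, DenExp (2 + 2 * n) (2 ^ n • P) := by
    intro n
    induction n with
    | zero =>
      rw [pow_zero, one_smul]
      exact ⟨_, _, hns, rfl, 49, 1, by decide, by decide, by norm_num⟩
    | succ n ih =>
      have := ih.double (by omega)
      rwa [← two_nsmul, ← mul_nsmul, ← pow_succ] at this
  have hinj : Function.Injective fun n : ℕ => 2 ^ n • P := by
    intro m n hmn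
    have hmn' : 2 ^ m • P = 2 ^ n • P := hmn
    have hm := key m
    rw [hmn'] at hm
    have h1 := hm.not_lt (key n)
    have h2 := (key n).not_lt hm
    omega
  refine Set.infinite_range_of_injective hinj (hfin.finite_multiples.subset ?_)
  rintro _ ⟨n, rfl⟩
  exact ⟨2 ^ n, rfl⟩

/-- Over `K = ℚ(√5)`, the elliptic curve `E : y² = x³ + 12x² − 108x = x(x+18)(x−6)`
has a point of infinite order; that is, `n = 6` is a properly `(ℚ(√5), π/3)`-congruent number. -/
theorem six_is_properly_congruent_over_sqrt_five
    (W : WeierstrassCurve.Affine ℚ⟮Real.sqrt 5⟯)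
    (hW : W = { a₁ := 0, a₂ := 12, a₃ := 0, a₄ := -108, a₆ := 0 }) :
    ∃ P : W.Point, ¬ IsOfFinAddOrder P := by
  subst hW
  exact curveSix_infinite _
end
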